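/- ∑_{n=1}^∞ 4^n (O_n² + O_n^{(2)}) / (n² · C(2n, n)) = π⁴/4. -/

import Mathlib

open scoped BigOperators

/-- Generalized odd harmonic number `O_n^{(r)} = ∑_{j=1}^n 1/(2j−1)^r` (real valued). -/
noncomputable def oddHR (r n : ℕ) : ℝ :=
  ∑ j ∈ Finset.Icc 1 n, 1 / (2 * (j : ℝ) - 1) ^ r

/-!
Write `(x)ₙ = x (x + 1) ⋯ (x + n - 1)`. Both sums of the nonnegative double series
`∑ₙ ∑ₖ n! / (x + k)ₙ₊₂` telescope: the sum over `k` is `n! / (n + 1) / (x)ₙ₊₁` and the sum over `n`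
is `1 / (x + k) ^ 2`. Replacing `x` by `x - t` and comparing coefficients of `t ^ r` gives
`∑ₙ n! / (n + 1) * hᵣ / (x)ₙ₊₁ = ∑ₖ (r + 1) / (x + k) ^ (r + 2)`, where `hᵣ` is the complete
homogeneous symmetric polynomial in `1 / x, …, 1 / (x + n)`. The theorem is the case `r = 2`,
`x = 1 / 2`: by Newton's identity `2 h₂ = p₁ ^ 2 + p₂`, the power sums being
`pᵣ = 2 ^ r * oddHR r (n + 1)`, and the right side is `48 ∑ₖ 1 / (2 k + 1) ^ 4`.
-/

open Filter Topology Finset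

section CompleteHomogeneous

variable {R : Type*} [CommSemiring R]

/-- The complete homogeneous symmetric polynomial of degree `r` in `y 0, …, y (n - 1)`, expanded
according to the largest index that occurs in a monomial. It expresses the Taylor coefficients of
`∏ j < n, (1 - y j * t)⁻¹`. It is defined by recursion rather than by evaluating
`MvPolynomial.hsymm` because the arguments below vary the number of variables. -/
def completeHomogeneous (y : ℕ → R) : ℕ → ℕ → R
  | 0, _ => 1
  | r + 1, n => ∑ j ∈ range n, y j * completeHomogeneous y r (j + 1)

lemma completeHomogeneous_zero (y : ℕ → R) (n : ℕ) : completeHomogeneous y 0 n = 1 := by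
  rw [completeHomogeneous]

lemma completeHomogeneous_succ_zero (y : ℕ → R) (r : ℕ) :
    completeHomogeneous y (r + 1) 0 = 0 := by
  rw [completeHomogeneous, sum_range_zero]

lemma completeHomogeneous_succ_succ (y : ℕ → R) (r n : ℕ) :
    completeHomogeneous y (r + 1) (n + 1) =
      completeHomogeneous y (r + 1) n + y n * completeHomogeneous y r (n + 1) := by
  simp only [completeHomogeneous, sum_range_succ]

lemma completeHomogeneous_succ_succ' (y : ℕ → R) (r n : ℕ) :
    completeHomogeneous y (r + 1) (n + 1) =
      completeHomogeneous (fun j => y (j + 1)) (r + 1) n +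
        y 0 * completeHomogeneous y r (n + 1) := by
  induction r generalizing n with
  | zero => simp only [completeHomogeneous, mul_one, sum_range_succ']
  | succ r ihr =>
    induction n with
    | zero => simp only [completeHomogeneous_succ_succ, completeHomogeneous_succ_zero]
    | succ n ihn =>
      calc completeHomogeneous y (r + 2) (n + 2)
          = completeHomogeneous (fun j => y (j + 1)) (r + 2) n +
              y 0 * completeHomogeneous y (r + 1) (n + 1) +
              y (n + 1) * (completeHomogeneous (fun j => y (j + 1)) (r + 1) (n + 1) +
                y 0 * completeHomogeneous y r (n + 2)) := by
            rw [completeHomogeneous_succ_succ y (r + 1) (n + 1), ihn, ihr (n + 1)]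
        _ = completeHomogeneous (fun j => y (j + 1)) (r + 2) (n + 1) +
              y 0 * completeHomogeneous y (r + 1) (n + 2) := by
            rw [completeHomogeneous_succ_succ _ (r + 1) n,
              completeHomogeneous_succ_succ y r (n + 1)]
            ring

lemma completeHomogeneous_one (y : ℕ → R) (n : ℕ) :
    completeHomogeneous y 1 n = ∑ j ∈ range n, y j := by
  simp only [completeHomogeneous, mul_one]

lemma two_mul_completeHomogeneous_two (y : ℕ → R) (n : ℕ) :
    2 * completeHomogeneous y 2 n = (∑ j ∈ range n, y j) ^ 2 + ∑ j ∈ range n, y j ^ 2 := by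
  induction n with
  | zero => simp [completeHomogeneous_succ_zero]
  | succ n ih =>
    rw [completeHomogeneous_succ_succ, mul_add, ih, completeHomogeneous_one, sum_range_succ,
      sum_range_succ]
    ring

lemma completeHomogeneous_nonneg [PartialOrder R] [IsOrderedRing R] {y : ℕ → R} (hy : ∀ j, 0 ≤ y j)
    (r n : ℕ) : 0 ≤ completeHomogeneous y r n := by
  induction r generalizing n with
  | zero => simp only [completeHomogeneous_zero, zero_le_one]
  | succ r ih =>
    rw [completeHomogeneous]
    exact sum_nonneg fun j _ => mul_nonneg (hy j) (ih (j + 1))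

end CompleteHomogeneous

lemma ascPochhammer_succ_eval_left {R : Type*} [CommSemiring R] (n : ℕ) (x : R) :
    (ascPochhammer R (n + 1)).eval x = x * (ascPochhammer R n).eval (x + 1) := by
  simp [ascPochhammer_succ_left, Polynomial.eval_comp]

lemma ascPochhammer_eval_eq_prod_range {R : Type*} [CommSemiring R] (n : ℕ) (x : R) :
    (ascPochhammer R n).eval x = ∏ j ∈ range n, (x + j) := by
  induction n with
  | zero => simp
  | succ n ih => rw [ascPochhammer_succ_eval, ih, prod_range_succ]

section InvRisingCoeff

variable {K : Type*} [Field K]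

/-- The coefficient of `t ^ r` in the Taylor expansion at `t = 0` of
`1 / ((x - t) (x - t + 1) ⋯ (x - t + n - 1))`, the reciprocal of a rising factorial.
Identities between these reciprocals become recurrences in `r` and `n`. -/
noncomputable def invRisingCoeff (r n : ℕ) (x : K) : K :=
  completeHomogeneous (fun j => (x + j)⁻¹) r n / (ascPochhammer K n).eval x

lemma invRisingCoeff_zero (n : ℕ) (x : K) :
    invRisingCoeff 0 n x = ((ascPochhammer K n).eval x)⁻¹ := by
  rw [invRisingCoeff, completeHomogeneous_zero, one_div]

lemma invRisingCoeff_succ_zero (r : ℕ) (x : K) : invRisingCoeff (r + 1) 0 x = 0 := by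
  rw [invRisingCoeff, completeHomogeneous_succ_zero, zero_div]

lemma mul_invRisingCoeff_zero_succ (n : ℕ) {x : K} (hx : x + n ≠ 0) :
    (x + n) * invRisingCoeff 0 (n + 1) x = invRisingCoeff 0 n x := by
  rw [invRisingCoeff_zero, invRisingCoeff_zero, ascPochhammer_succ_eval, mul_inv_rev,
    mul_inv_cancel_left₀ hx]

lemma mul_invRisingCoeff_succ_succ (r n : ℕ) {x : K} (hx : x + n ≠ 0) :
    (x + n) * invRisingCoeff (r + 1) (n + 1) x =
      invRisingCoeff (r + 1) n x + invRisingCoeff r (n + 1) x := by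
  simp only [invRisingCoeff, completeHomogeneous_succ_succ _ r n, ascPochhammer_succ_eval]
  field_simp

lemma mul_invRisingCoeff_zero_succ' (n : ℕ) {x : K} (hx : x ≠ 0) :
    x * invRisingCoeff 0 (n + 1) x = invRisingCoeff 0 n (x + 1) := by
  rw [invRisingCoeff_zero, invRisingCoeff_zero, ascPochhammer_succ_eval_left, mul_inv,
    mul_inv_cancel_left₀ hx]

lemma mul_invRisingCoeff_succ_succ' (r n : ℕ) {x : K} (hx : x ≠ 0) :
    x * invRisingCoeff (r + 1) (n + 1) x =
      invRisingCoeff (r + 1) n (x + 1) + invRisingCoeff r (n + 1) x := by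
  have hshift : (fun j : ℕ => (x + (j + 1 : ℕ))⁻¹) = fun j : ℕ => (x + 1 + j)⁻¹ := by
    funext j
    push_cast
    rw [add_right_comm, add_assoc]
  simp only [invRisingCoeff, completeHomogeneous_succ_succ' _ r n, ascPochhammer_succ_eval_left,
    hshift, Nat.cast_zero, add_zero]
  field_simp

lemma natCast_mul_invRisingCoeff_succ (r n : ℕ) {x : K} (hx : x ≠ 0) (hxn : x + n ≠ 0) :
    n * invRisingCoeff r (n + 1) x = invRisingCoeff r n x - invRisingCoeff r n (x + 1) := by
  cases r with
  | zero =>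
    linear_combination mul_invRisingCoeff_zero_succ n hxn - mul_invRisingCoeff_zero_succ' n hx
  | succ r =>
    linear_combination
      mul_invRisingCoeff_succ_succ r n hxn - mul_invRisingCoeff_succ_succ' r n hx

lemma mul_factorial_mul_invRisingCoeff_zero (n : ℕ) {x : K} (hx : x + (n + 1 : ℕ) ≠ 0) :
    x * (n.factorial * invRisingCoeff 0 (n + 2) x) =
      n.factorial * invRisingCoeff 0 (n + 1) x -
        (n + 1).factorial * invRisingCoeff 0 (n + 2) x := by
  rw [Nat.factorial_succ, Nat.cast_mul]
  linear_combination (n.factorial : K) * mul_invRisingCoeff_zero_succ (n + 1) hx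

lemma mul_factorial_mul_invRisingCoeff_succ (r n : ℕ) {x : K} (hx : x + (n + 1 : ℕ) ≠ 0) :
    x * (n.factorial * invRisingCoeff (r + 1) (n + 2) x) =
      n.factorial * invRisingCoeff (r + 1) (n + 1) x -
        (n + 1).factorial * invRisingCoeff (r + 1) (n + 2) x +
        n.factorial * invRisingCoeff r (n + 2) x := by
  rw [Nat.factorial_succ, Nat.cast_mul]
  linear_combination (n.factorial : K) * mul_invRisingCoeff_succ_succ r (n + 1) hx

lemma invRisingCoeff_one {x : K} (hx : x ≠ 0) (r : ℕ) :
    invRisingCoeff r 1 x = 1 / x ^ (r + 1) := by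
  induction r with
  | zero => simp [invRisingCoeff_zero]
  | succ r ih =>
    have h := mul_invRisingCoeff_succ_succ r 0 (x := x) (by simpa using hx)
    rw [Nat.cast_zero, add_zero, zero_add, invRisingCoeff_succ_zero, zero_add, ih] at h
    rw [pow_succ, ← div_div, eq_div_iff hx, mul_comm, h]

variable [LinearOrder K] [IsStrictOrderedRing K]

lemma invRisingCoeff_nonneg (r n : ℕ) {x : K} (hx : 0 < x) : 0 ≤ invRisingCoeff r n x :=
  div_nonneg (completeHomogeneous_nonneg (fun _ => by positivity) r n)
    (ascPochhammer_pos n x hx).le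

-- The coefficients are nonnegative, so each term of the Taylor expansion is at most its sum.
lemma pow_mul_invRisingCoeff_le (r n : ℕ) {t x : K} (ht : 0 ≤ t) (htx : t < x) :
    t ^ r * invRisingCoeff r n x ≤ invRisingCoeff 0 n (x - t) := by
  induction r generalizing n with
  | zero =>
    rw [pow_zero, one_mul, invRisingCoeff_zero, invRisingCoeff_zero]
    have := ascPochhammer_pos n (x - t) (sub_pos.2 htx)
    gcongr
    rw [ascPochhammer_eval_eq_prod_range, ascPochhammer_eval_eq_prod_range]
    gcongr
    linarith
  | succ r ihr =>
    induction n with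
    | zero =>
      rw [invRisingCoeff_succ_zero, mul_zero]
      exact invRisingCoeff_nonneg 0 0 (sub_pos.2 htx)
    | succ n ihn =>
      have hxn : 0 < x + n := by linarith [n.cast_nonneg (α := K)]
      have hxtn : 0 < x - t + n := by linarith [n.cast_nonneg (α := K)]
      refine le_of_mul_le_mul_left ?_ hxn
      calc (x + n) * (t ^ (r + 1) * invRisingCoeff (r + 1) (n + 1) x)
          = t ^ (r + 1) * invRisingCoeff (r + 1) n x +
              t * (t ^ r * invRisingCoeff r (n + 1) x) := by
            linear_combination t ^ (r + 1) * mul_invRisingCoeff_succ_succ r n hxn.ne'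
        _ ≤ invRisingCoeff 0 n (x - t) + t * invRisingCoeff 0 (n + 1) (x - t) := by
            gcongr
            exact ihr (n + 1)
        _ = (x + n) * invRisingCoeff 0 (n + 1) (x - t) := by
            linear_combination -mul_invRisingCoeff_zero_succ n hxtn.ne'

end InvRisingCoeff

lemma tendsto_invRisingCoeff_atTop (r n : ℕ) :
    Tendsto (fun x : ℝ => invRisingCoeff r (n + 1) x) atTop (𝓝 0) := by
  have hdeg : 0 < (ascPochhammer ℝ (n + 1)).degree :=
    Polynomial.natDegree_pos_iff_degree_pos.1 (by rw [ascPochhammer_natDegree]; exact n.succ_pos)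
  have hzero : Tendsto (fun x : ℝ => invRisingCoeff 0 (n + 1) x) atTop (𝓝 0) := by
    simp only [invRisingCoeff_zero]
    exact tendsto_inv_atTop_zero.comp <| Polynomial.tendsto_atTop_of_leadingCoeff_nonneg _ hdeg
      (by simp [(monic_ascPochhammer ℝ (n + 1)).leadingCoeff])
  refine squeeze_zero' ?_ ?_ (hzero.comp (tendsto_atTop_add_const_right atTop (-1) tendsto_id))
  · filter_upwards [eventually_gt_atTop 0] with x hx using invRisingCoeff_nonneg r (n + 1) hx
  · filter_upwards [eventually_gt_atTop 1] with x hx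
    simpa [sub_eq_add_neg] using pow_mul_invRisingCoeff_le r (n + 1) zero_le_one hx

lemma tendsto_factorial_mul_invRisingCoeff_zero {x : ℝ} (hx : 0 < x) :
    Tendsto (fun n : ℕ => n.factorial * invRisingCoeff 0 (n + 1) x) atTop (𝓝 0) := by
  have hpow := (tendsto_rpow_neg_atTop hx).comp (tendsto_natCast_atTop_atTop (R := ℝ))
  have hlim := (Real.GammaSeq_tendsto_Gamma x).mul hpow
  rw [mul_zero] at hlim
  refine hlim.congr' ?_
  filter_upwards [eventually_gt_atTop 0] with n hn
  have hn' : (0 : ℝ) < n := by exact_mod_cast hn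
  rw [Function.comp_apply, Real.rpow_neg hn'.le, invRisingCoeff_zero,
    ascPochhammer_eval_eq_prod_range, Real.GammaSeq]
  field_simp

lemma tendsto_factorial_mul_invRisingCoeff (r : ℕ) {x : ℝ} (hx : 0 < x) :
    Tendsto (fun n : ℕ => n.factorial * invRisingCoeff r (n + 1) x) atTop (𝓝 0) := by
  have hhalf : 0 < x / 2 := half_pos hx
  have hbound := (tendsto_factorial_mul_invRisingCoeff_zero hhalf).div_const ((x / 2) ^ r)
  rw [zero_div] at hbound
  refine squeeze_zero (fun n => mul_nonneg (by positivity) (invRisingCoeff_nonneg r (n + 1) hx))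
    (fun n => ?_) hbound
  rw [mul_div_assoc]
  gcongr
  rw [le_div_iff₀' (by positivity)]
  simpa only [sub_half] using pow_mul_invRisingCoeff_le r (n + 1) hhalf.le (half_lt_self hx)

lemma hasSum_of_eq_sub_add {u f g : ℕ → ℝ} {b : ℝ} (hf : ∀ n, 0 ≤ f n)
    (hfu : ∀ n, f n = u n - u (n + 1) + g n) (hu : Tendsto u atTop (𝓝 0)) (hg : HasSum g b) :
    HasSum f (u 0 + b) := by
  rw [hasSum_iff_tendsto_nat_of_nonneg hf]
  simp_rw [hfu, sum_add_distrib, sum_range_sub']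
  simpa using (tendsto_const_nhds.sub hu).add hg.tendsto_sum_nat

lemma hasSum_of_hasSum_rows_of_hasSum_cols {α β : Type*} {f : α → β → ℝ} {row : α → ℝ}
    {col : β → ℝ} {s : ℝ} (hf : ∀ a b, 0 ≤ f a b) (hrow : ∀ a, HasSum (f a) (row a))
    (hcol : ∀ b, HasSum (fun a => f a b) (col b)) (hs : HasSum col s) : HasSum row s := by
  have hsum : Summable fun p : β × α => f p.2 p.1 := by
    refine (summable_prod_of_nonneg fun p => hf p.2 p.1).2 ⟨fun b => (hcol b).summable, ?_⟩
    simpa only [(hcol _).tsum_eq] using hs.summable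
  have htotal := hsum.hasSum
  rw [(htotal.prod_fiberwise hcol).unique hs] at htotal
  exact ((Equiv.prodComm α β).hasSum_iff.2 htotal).prod_fiberwise hrow

lemma hasSum_invRisingCoeff_add_natCast (r n : ℕ) {x : ℝ} (hx : 0 < x) :
    HasSum (fun k : ℕ => ((n + 1 : ℕ) : ℝ) * invRisingCoeff r (n + 2) (x + k))
      (invRisingCoeff r (n + 1) x) := by
  have hlim : Tendsto (fun k : ℕ => invRisingCoeff r (n + 1) (x + k)) atTop (𝓝 0) :=
    (tendsto_invRisingCoeff_atTop r n).comp
      (tendsto_atTop_add_const_left _ x tendsto_natCast_atTop_atTop)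
  have hstep (k : ℕ) : ((n + 1 : ℕ) : ℝ) * invRisingCoeff r (n + 2) (x + k) =
      invRisingCoeff r (n + 1) (x + k) - invRisingCoeff r (n + 1) (x + (k + 1 : ℕ)) + 0 := by
    rw [natCast_mul_invRisingCoeff_succ r (n + 1) (by positivity) (by positivity), Nat.cast_succ k,
      add_zero, add_assoc x]
  simpa using hasSum_of_eq_sub_add
    (fun k => mul_nonneg (Nat.cast_nonneg _) (invRisingCoeff_nonneg r (n + 2) (by positivity)))
    hstep hlim hasSum_zero

lemma hasSum_factorial_mul_invRisingCoeff (r : ℕ) {x : ℝ} (hx : 0 < x) :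
    HasSum (fun n : ℕ => n.factorial * invRisingCoeff r (n + 2) x) ((r + 1) / x ^ (r + 2)) := by
  have hnonneg (r n : ℕ) : 0 ≤ x * (n.factorial * invRisingCoeff r (n + 2) x) :=
    mul_nonneg hx.le (mul_nonneg (Nat.cast_nonneg _) (invRisingCoeff_nonneg r (n + 2) hx))
  have hne (n : ℕ) : x + (n + 1 : ℕ) ≠ 0 := by positivity
  have hinitial (r : ℕ) :
      (Nat.factorial 0 : ℝ) * invRisingCoeff r (0 + 1) x = 1 / x ^ (r + 1) := by
    rw [Nat.factorial_zero, Nat.cast_one, one_mul, zero_add, invRisingCoeff_one hx.ne']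
  rw [← hasSum_mul_left_iff hx.ne']
  induction r with
  | zero =>
    convert! hasSum_of_eq_sub_add (hnonneg 0)
      (fun n => by rw [mul_factorial_mul_invRisingCoeff_zero n (hne n), add_zero])
      (tendsto_factorial_mul_invRisingCoeff 0 hx) hasSum_zero using 1
    rw [hinitial, Nat.cast_zero]
    field_simp
    ring
  | succ r ih =>
    rw [hasSum_mul_left_iff hx.ne'] at ih
    convert! hasSum_of_eq_sub_add (hnonneg (r + 1))
      (fun n => mul_factorial_mul_invRisingCoeff_succ r n (hne n))
      (tendsto_factorial_mul_invRisingCoeff (r + 1) hx) ih using 1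
    rw [hinitial, Nat.cast_succ]
    field_simp
    ring

theorem hasSum_factorial_div_mul_invRisingCoeff (r : ℕ) {x s : ℝ} (hx : 0 < x)
    (hs : HasSum (fun k : ℕ => 1 / (x + k) ^ (r + 2)) s) :
    HasSum (fun n : ℕ => n.factorial / (n + 1) * invRisingCoeff r (n + 1) x) ((r + 1) * s) := by
  have hcol : HasSum (fun k : ℕ => (r + 1) / (x + k) ^ (r + 2)) ((r + 1) * s) := by
    simpa only [mul_one_div] using hs.mul_left (r + 1 : ℝ)
  refine hasSum_of_hasSum_rows_of_hasSum_cols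
    (f := fun n k : ℕ => n.factorial * invRisingCoeff r (n + 2) (x + k)) (fun n k => ?_)
    (fun n => ?_) (fun k => hasSum_factorial_mul_invRisingCoeff r (by positivity)) hcol
  · exact mul_nonneg (Nat.cast_nonneg _) (invRisingCoeff_nonneg r (n + 2) (by positivity))
  · refine ((hasSum_invRisingCoeff_add_natCast r n hx).mul_left
      (n.factorial / (n + 1) : ℝ)).congr_fun fun k => ?_
    push_cast
    field_simp

lemma hasSum_one_div_odd_pow {s : ℕ} {z : ℝ} (hz : HasSum (fun n : ℕ => 1 / (n : ℝ) ^ s) z) :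
    HasSum (fun k : ℕ => 1 / (2 * k + 1 : ℝ) ^ s) (z - z / 2 ^ s) := by
  have heven : HasSum (fun k : ℕ => 1 / ((2 * k : ℕ) : ℝ) ^ s) (z / 2 ^ s) := by
    refine (hz.div_const (2 ^ s)).congr_fun fun k => ?_
    rw [Nat.cast_mul, Nat.cast_ofNat, mul_pow, div_div, mul_comm]
  have hodd : Summable fun k : ℕ => 1 / ((2 * k + 1 : ℕ) : ℝ) ^ s :=
    hz.summable.comp_injective (i := fun k : ℕ => 2 * k + 1) fun a b h => by simpa using h
  have htotal := (heven.even_add_odd (f := fun n : ℕ => 1 / (n : ℝ) ^ s) hodd.hasSum).unique hz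
  rw [← eq_sub_iff_add_eq'.2 htotal]
  simpa only [Nat.cast_add, Nat.cast_mul, Nat.cast_ofNat, Nat.cast_one] using hodd.hasSum

lemma hasSum_one_div_half_add_pow {s : ℕ} {z : ℝ} (hz : HasSum (fun n : ℕ => 1 / (n : ℝ) ^ s) z) :
    HasSum (fun k : ℕ => 1 / (1 / 2 + k : ℝ) ^ s) ((2 ^ s - 1) * z) := by
  convert! (hasSum_one_div_odd_pow hz).mul_left (2 ^ s) using 1
  · funext k
    rw [show (2 * k + 1 : ℝ) = 2 * (1 / 2 + k) by ring, mul_pow]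
    field_simp
  · field_simp

lemma sum_range_inv_half_add_pow (r n : ℕ) :
    ∑ j ∈ range n, ((1 / 2 + j : ℝ)⁻¹) ^ r = 2 ^ r * oddHR r n := by
  rw [oddHR, mul_sum, ← Ico_succ_right_eq_Icc, sum_Ico_eq_sum_range]
  refine sum_congr rfl fun j _ => ?_
  rw [show 2 * ((1 + j : ℕ) : ℝ) - 1 = 2 * (1 / 2 + j) by push_cast; ring, mul_pow, inv_pow]
  field_simp

lemma ascPochhammer_eval_half {K : Type*} [Field K] [CharZero K] (n : ℕ) :
    4 ^ n * (ascPochhammer K n).eval (1 / 2) = n.factorial * n.centralBinom := by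
  induction n with
  | zero => simp
  | succ n ih =>
    have h : ((n : K) + 1) * (n + 1).centralBinom = 2 * (2 * n + 1) * n.centralBinom := by
      exact_mod_cast Nat.succ_mul_centralBinom_succ n
    rw [ascPochhammer_succ_eval, Nat.factorial_succ]
    push_cast
    linear_combination (4 * n + 2) * ih - (n.factorial : K) * h

lemma invRisingCoeff_two_half (n : ℕ) :
    invRisingCoeff 2 n (1 / 2 : ℝ) =
      2 * (oddHR 1 n ^ 2 + oddHR 2 n) * 4 ^ n / (n.factorial * n.centralBinom) := by
  have hnewton : completeHomogeneous (fun j : ℕ => (1 / 2 + j : ℝ)⁻¹) 2 n =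
      2 * (oddHR 1 n ^ 2 + oddHR 2 n) := by
    have h := two_mul_completeHomogeneous_two (fun j : ℕ => (1 / 2 + j : ℝ)⁻¹) n
    have hone := sum_range_inv_half_add_pow 1 n
    simp only [pow_one] at hone
    rw [hone, sum_range_inv_half_add_pow] at h
    linear_combination h / 2
  rw [invRisingCoeff, hnewton, ← ascPochhammer_eval_half]
  field_simp

theorem stmt_10 :
    ∑' n : ℕ, (4 : ℝ) ^ (n + 1) * (oddHR 1 (n + 1) ^ 2 + oddHR 2 (n + 1)) /
        (((n : ℝ) + 1) ^ 2 * (Nat.choose (2 * (n + 1)) (n + 1) : ℝ)) =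
      Real.pi ^ 4 / 4 := by
  have h := (hasSum_factorial_div_mul_invRisingCoeff 2 one_half_pos
    (hasSum_one_div_half_add_pow hasSum_zeta_four)).div_const 2
  have hvalue : ((2 : ℕ) + 1) * ((2 ^ 4 - 1) * (Real.pi ^ 4 / 90)) / 2 = Real.pi ^ 4 / 4 := by
    push_cast
    ring
  rw [hvalue] at h
  refine (h.congr_fun fun n => ?_).tsum_eq
  rw [← Nat.centralBinom_eq_two_mul_choose, invRisingCoeff_two_half, Nat.factorial_succ]
  push_cast
  field_simp
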